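/- arXiv:2202.13111 — 5 statements merged into one kernel-verified Lean document; each statement's English description precedes it below -/
import Mathlib

section
/- Let Y be a nonempty finite type and let S : ℝ≥0 → Matrix Y Y ℝ satisfy: every S t has nonnegative entries, S 0 is the identity matrix, S (t + s) = (S t) * (S s) for all t, s ≥ 0, and there are constants M ≥ 1 and ξ > 0 with ‖S t‖ ≤ M · exp(−ξ t) for all t ≥ 0 (operator norm induced by the supremum norm). Define, for f : Y → ℝ, ‖f‖_* := ⨆_{t ≥ 0} ‖exp(ξ t) • ((S t).mulVec |f|)‖, where |f| is the pointwise absolute value of f and ‖·‖ is the supremum norm. Then ‖·‖_* is a norm on Y → ℝ: it takes finite values, satisfies the triangle inequality ‖f + g‖_* ≤ ‖f‖_* + ‖g‖_*, is absolutely homogeneous (‖c • f‖_* = |c| · ‖f‖_*), and ‖f‖_* = 0 implies f = 0. -/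
attribute [local instance]
  Matrix.linftyOpNormedAddCommGroup Matrix.linftyOpNormedRing Matrix.linftyOpNormedAlgebra

/-- The Feller re-norming `‖f‖_* = ⨆ t ≥ 0, ‖exp (ξ t) • (S t).mulVec |f|‖` associated with a
semigroup `S` of nonnegative matrices, where `‖·‖` is the supremum norm. -/
noncomputable def starNorm {Y : Type*} [Fintype Y] (ξ : ℝ) (S : NNReal → Matrix Y Y ℝ)
    (f : Y → ℝ) : ℝ :=
  ⨆ t : NNReal, ‖Real.exp (ξ * t) • (S t).mulVec (fun y => |f y|)‖

/-!
For a positive operator `T` from a vector lattice to a normed lattice, `x ↦ ‖T |x|‖` is a seminorm: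
positivity turns `|x + y| ≤ |x| + |y|` into `T |x + y| ≤ T |x| + T |y|`, and a solid norm is
monotone on the positive cone. A pointwise bounded supremum of such seminorms is again a seminorm,
and it separates points as soon as one of the operators is injective. The Feller re-norming is this
supremum for the operators `exp (ξ t) • S t`; the exponential decay of `S` is exactly their uniform
boundedness, and `S 0 = 1` provides the injective one.
-/

theorem abs_smul_of_posSMulMono {𝕜 E : Type*} [Field 𝕜] [LinearOrder 𝕜] [IsStrictOrderedRing 𝕜]
    [AddCommGroup E] [Lattice E] [Module 𝕜 E] [PosSMulMono 𝕜 E] (c : 𝕜) (x : E) :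
    |c • x| = |c| • |x| := by
  have abs_pos_smul {r : 𝕜} (hr : 0 < r) (y : E) : |r • y| = r • |y| := by
    rw [abs, abs, ← smul_neg]
    exact ((OrderIso.smulRight hr).map_sup y (-y)).symm
  rcases lt_trichotomy c 0 with hc | rfl | hc
  · rw [abs_of_neg hc, ← abs_pos_smul (neg_pos.2 hc), neg_smul, abs_neg]
  · simp [abs]
  · rw [abs_of_pos hc, abs_pos_smul hc]

theorem norm_le_norm_of_nonneg_of_le {E : Type*} [NormedAddCommGroup E] [Lattice E]
    [HasSolidNorm E] [IsOrderedAddMonoid E] {x y : E} (hx : 0 ≤ x) (hxy : x ≤ y) : ‖x‖ ≤ ‖y‖ :=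
  norm_le_norm_of_abs_le_abs (abs_le_abs_of_nonneg hx hxy)

instance hasSolidNorm_pi {ι : Type*} [Fintype ι] {E : ι → Type*} [∀ i, NormedAddCommGroup (E i)]
    [∀ i, Lattice (E i)] [∀ i, HasSolidNorm (E i)] : HasSolidNorm (∀ i, E i) where
  solid _ y hxy := (pi_norm_le_iff_of_nonneg (norm_nonneg y)).2 fun i =>
    (norm_le_norm_of_abs_le_abs (hxy i)).trans (norm_le_pi_norm y i)

section FellerSeminorm

variable {ι E F : Type*} [AddCommGroup E] [Lattice E] [IsOrderedAddMonoid E] [Module ℝ E]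
  [PosSMulMono ℝ E] [NormedAddCommGroup F] [Lattice F] [HasSolidNorm F] [IsOrderedAddMonoid F]
  [NormedSpace ℝ F]

/-- The seminorm `x ↦ ‖T |x|‖` attached to a positive operator `T` with values in a normed
lattice. -/
def normAbsSeminorm (T : E →ₚ[ℝ] F) : Seminorm ℝ E :=
  Seminorm.of (fun x => ‖T |x|‖)
    (fun x y => calc
      ‖T |x + y|‖ ≤ ‖T (|x| + |y|)‖ :=
        norm_le_norm_of_nonneg_of_le (T.map_nonneg (abs_nonneg _)) (T.monotone' (abs_add_le x y))
      _ = ‖T |x| + T |y|‖ := by rw [map_add]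
      _ ≤ ‖T |x|‖ + ‖T |y|‖ := norm_add_le _ _)
    (fun c x => by rw [abs_smul_of_posSMulMono, map_smul, norm_smul, norm_abs_eq_norm])

/-- The Feller re-norming `x ↦ ⨆ i, ‖T i |x|‖` by a family of positive operators, as a supremum in
the lattice of seminorms. That supremum is the zero seminorm unless the family is pointwise
bounded. -/
noncomputable def fellerSeminorm (T : ι → E →ₚ[ℝ] F) : Seminorm ℝ E :=
  ⨆ i, normAbsSeminorm (T i)

variable {T : ι → E →ₚ[ℝ] F}

theorem fellerSeminorm_apply (hT : ∀ x, BddAbove (Set.range fun i => ‖T i |x|‖)) (x : E) :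
    fellerSeminorm T x = ⨆ i, ‖T i |x|‖ :=
  Seminorm.iSup_apply (Seminorm.bddAbove_range_iff.2 hT)

theorem eq_zero_of_fellerSeminorm_eq_zero (hT : ∀ x, BddAbove (Set.range fun i => ‖T i |x|‖))
    {i : ι} (hi : Function.Injective (T i)) {x : E} (hx : fellerSeminorm T x = 0) : x = 0 := by
  have norm_le_zero : ‖T i |x|‖ ≤ 0 := by
    rw [← hx, fellerSeminorm_apply hT]
    exact le_ciSup (hT x) i
  have abs_le_zero : |x| ≤ 0 := ((map_eq_zero_iff (T i) hi).1 (norm_le_zero_iff.1 norm_le_zero)).le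
  exact le_antisymm ((le_abs_self x).trans abs_le_zero)
    (neg_nonpos.1 ((neg_le_abs x).trans abs_le_zero))

end FellerSeminorm

section Matrices

variable {m n : Type*} [Fintype n]

/-- Multiplication by an entrywise nonnegative matrix, as a positive linear map. -/
def mulVecPositiveLinearMap {R : Type*} [CommRing R] [PartialOrder R] [IsOrderedRing R]
    (A : Matrix m n R) (hA : ∀ i j, 0 ≤ A i j) : (n → R) →ₚ[R] (m → R) :=
  PositiveLinearMap.mk₀ A.mulVecLin fun _ hv i => dotProduct_nonneg_of_nonneg (hA i) hv

theorem norm_exp_smul_le {E : Type*} [SeminormedAddCommGroup E] [NormedSpace ℝ E] {x : E}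
    {a C : ℝ} (hx : ‖x‖ ≤ C * Real.exp (-a)) : ‖Real.exp a • x‖ ≤ C := by
  rw [norm_smul, Real.norm_of_nonneg (Real.exp_nonneg a), mul_comm]
  rwa [Real.exp_neg, ← div_eq_mul_inv, le_div_iff₀ (Real.exp_pos a)] at hx

theorem bddAbove_range_norm_exp_smul_mulVec [Fintype m] {ι : Type*} {A : ι → Matrix m n ℝ}
    {a : ι → ℝ} {M : ℝ} (hA : ∀ i, ‖A i‖ ≤ M * Real.exp (-a i)) (v : n → ℝ) :
    BddAbove (Set.range fun i => ‖Real.exp (a i) • (A i).mulVec v‖) := by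
  refine ⟨M * ‖v‖, Set.forall_mem_range.2 fun i => norm_exp_smul_le ?_⟩
  calc
    ‖(A i).mulVec v‖ ≤ ‖A i‖ * ‖v‖ := Matrix.linfty_opNorm_mulVec (A i) v
    _ ≤ M * Real.exp (-a i) * ‖v‖ := by gcongr; exact hA i
    _ = M * ‖v‖ * Real.exp (-a i) := by ring

end Matrices

theorem starNorm_is_norm_general {Y : Type*} [Fintype Y] (S : NNReal → Matrix Y Y ℝ)
    (hpos : ∀ t, ∀ x y, 0 ≤ S t x y) (hinj : ∃ t, Function.Injective (S t).mulVec) (M ξ : ℝ)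
    (hdecay : ∀ t : NNReal, ‖S t‖ ≤ M * Real.exp (-ξ * t)) :
    (∀ f : Y → ℝ,
        BddAbove (Set.range fun t : NNReal =>
          ‖Real.exp (ξ * t) • (S t).mulVec (fun y => |f y|)‖)) ∧
    (∀ f g : Y → ℝ, starNorm ξ S (f + g) ≤ starNorm ξ S f + starNorm ξ S g) ∧
    (∀ (c : ℝ) (f : Y → ℝ), starNorm ξ S (c • f) = |c| * starNorm ξ S f) ∧
    (∀ f : Y → ℝ, starNorm ξ S f = 0 → f = 0) := by
  let T (t : NNReal) : (Y → ℝ) →ₚ[ℝ] (Y → ℝ) :=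
    mulVecPositiveLinearMap (Real.exp (ξ * t) • S t) fun x y =>
      mul_nonneg (Real.exp_nonneg _) (hpos t x y)
  have T_apply (t : NNReal) (f : Y → ℝ) : T t f = Real.exp (ξ * t) • (S t).mulVec f :=
    Matrix.smul_mulVec _ _ _
  have bounded (f : Y → ℝ) :
      BddAbove (Set.range fun t : NNReal => ‖Real.exp (ξ * t) • (S t).mulVec |f|‖) :=
    bddAbove_range_norm_exp_smul_mulVec (fun t => by simpa only [neg_mul] using hdecay t) |f|
  have T_bounded (f : Y → ℝ) : BddAbove (Set.range fun t => ‖T t |f|‖) := by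
    simpa only [T_apply] using bounded f
  have starNorm_eq (f : Y → ℝ) : starNorm ξ S f = fellerSeminorm T f := by
    simp only [fellerSeminorm_apply T_bounded, T_apply]
    rfl
  obtain ⟨t, ht⟩ := hinj
  have T_injective : Function.Injective (T t) := fun f g hfg =>
    ht (smul_right_injective _ (Real.exp_ne_zero (ξ * t)) (by simpa only [T_apply] using hfg))
  simp only [starNorm_eq]
  exact ⟨bounded, map_add_le_add _, map_smul_eq_mul _,
    fun _ => eq_zero_of_fellerSeminorm_eq_zero T_bounded T_injective⟩

/-- For a uniformly exponentially stable semigroup of nonnegative matrices, the Feller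
re-norming `‖·‖_*` is a genuine (finite-valued) norm on `Y → ℝ`. -/
theorem starNorm_is_norm {Y : Type*} [Fintype Y] [Nonempty Y] [DecidableEq Y]
    (S : NNReal → Matrix Y Y ℝ)
    (hpos : ∀ t, ∀ x y, 0 ≤ S t x y)
    (hid : S 0 = 1)
    (hsem : ∀ t s, S (t + s) = S t * S s)
    (M ξ : ℝ) (hM : 1 ≤ M) (hξ : 0 < ξ)
    (hdecay : ∀ t : NNReal, ‖S t‖ ≤ M * Real.exp (-ξ * t)) :
    (∀ f : Y → ℝ,
        BddAbove (Set.range fun t : NNReal =>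
          ‖Real.exp (ξ * t) • (S t).mulVec (fun y => |f y|)‖)) ∧
    (∀ f g : Y → ℝ, starNorm ξ S (f + g) ≤ starNorm ξ S f + starNorm ξ S g) ∧
    (∀ (c : ℝ) (f : Y → ℝ), starNorm ξ S (c • f) = |c| * starNorm ξ S f) ∧
    (∀ f : Y → ℝ, starNorm ξ S f = 0 → f = 0) := by
  exact starNorm_is_norm_general S hpos
    ⟨0, fun f g hfg => by simpa only [hid, Matrix.one_mulVec] using hfg⟩ M ξ hdecay
end

section
/- Let Y be a nonempty finite type and let S : ℝ≥0 → Matrix Y Y ℝ satisfy: every S t has nonnegative entries, S 0 is the identity matrix, S (t + s) = (S t) * (S s) for all t, s ≥ 0, and there are constants M ≥ 1 and ξ > 0 with ‖S t‖ ≤ M · exp(−ξ t) for all t ≥ 0 (operator norm induced by the supremum norm). With ‖f‖_* := ⨆_{t ≥ 0} ‖exp(ξ t) • ((S t).mulVec |f|)‖, the semigroup is quasicontractive in this norm: ‖(S t).mulVec f‖_* ≤ exp(−ξ t) · ‖f‖_* for every t ≥ 0 and every f : Y → ℝ. -/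
attribute [local instance]
  Matrix.linftyOpNormedAddCommGroup Matrix.linftyOpNormedRing Matrix.linftyOpNormedAlgebra

/-!
The weighted orbit bound `M * ‖f‖` makes the supremum defining `‖f‖_*` finite. Positivity and the
semigroup law give `S s |S t f| ≤ S s (S t |f|) = S (s + t) |f|` pointwise, so the time-`s` term of
`‖S t f‖_*` is at most `exp (-ξ t)` times the time-`(s + t)` term of `‖f‖_*`.
-/

open scoped Matrix

section PiNorm

variable {ι : Type*} {E : ι → Type*} [Fintype ι] [∀ i, NormedAddCommGroup (E i)]
  [∀ i, Lattice (E i)] [∀ i, HasSolidNorm (E i)]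

instance instHasSolidNormPi : HasSolidNorm (∀ i, E i) where
  solid _ g h := (pi_norm_le_iff_of_nonneg (norm_nonneg g)).2 fun i =>
    (norm_le_norm_of_abs_le_abs (h i)).trans (norm_le_pi_norm g i)

end PiNorm

section NonnegMatrix

variable {l m n R : Type*} [Fintype n]

theorem mulVec_le_mulVec_of_nonneg [Semiring R] [PartialOrder R] [IsOrderedRing R]
    {A : Matrix m n R} (hA : ∀ i j, 0 ≤ A i j) {v w : n → R} (hvw : v ≤ w) :
    A *ᵥ v ≤ A *ᵥ w :=
  fun i => dotProduct_le_dotProduct_of_nonneg_left hvw (hA i)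

variable [Ring R] [LinearOrder R] [IsOrderedRing R]

theorem abs_mulVec_le_mulVec_abs {A : Matrix m n R} (hA : ∀ i j, 0 ≤ A i j) (v : n → R) :
    |A *ᵥ v| ≤ A *ᵥ |v| := by
  intro i
  calc |∑ j, A i j * v j| ≤ ∑ j, |A i j * v j| := Finset.abs_sum_le_sum_abs _ _
    _ = ∑ j, A i j * |v j| := by simp only [abs_mul, abs_of_nonneg (hA i _)]

theorem mulVec_abs_mulVec_le [Fintype m] {A : Matrix l m R} {B : Matrix m n R}
    (hA : ∀ i j, 0 ≤ A i j) (hB : ∀ i j, 0 ≤ B i j) (v : n → R) :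
    A *ᵥ |B *ᵥ v| ≤ (A * B) *ᵥ |v| := by
  rw [← Matrix.mulVec_mulVec]
  exact mulVec_le_mulVec_of_nonneg hA (abs_mulVec_le_mulVec_abs hB v)

theorem mulVec_abs_nonneg {A : Matrix m n R} (hA : ∀ i j, 0 ≤ A i j) (v : n → R) :
    0 ≤ A *ᵥ |v| :=
  (abs_nonneg _).trans (abs_mulVec_le_mulVec_abs hA v)

end NonnegMatrix

theorem norm_mulVec_abs_mulVec_le {l m n R : Type*} [Fintype l] [Fintype m] [Fintype n]
    [NormedRing R] [LinearOrder R] [IsOrderedRing R] [HasSolidNorm R]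
    {A : Matrix l m R} {B : Matrix m n R}
    (hA : ∀ i j, 0 ≤ A i j) (hB : ∀ i j, 0 ≤ B i j) (v : n → R) :
    ‖A *ᵥ |B *ᵥ v|‖ ≤ ‖(A * B) *ᵥ |v|‖ :=
  norm_le_norm_of_abs_le_abs <|
    abs_le_abs_of_nonneg (mulVec_abs_nonneg hA _) (mulVec_abs_mulVec_le hA hB v)

theorem norm_exp_smul {E : Type*} [SeminormedAddCommGroup E] [NormedSpace ℝ E] (a : ℝ) (x : E) :
    ‖Real.exp a • x‖ = Real.exp a * ‖x‖ :=
  norm_smul_of_nonneg (Real.exp_pos a).le x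

theorem norm_exp_smul_mulVec_le {m n : Type*} [Fintype m] [Fintype n] {A : Matrix m n ℝ}
    {M a : ℝ} (hA : ‖A‖ ≤ M * Real.exp (-a)) (v : n → ℝ) :
    ‖Real.exp a • A *ᵥ v‖ ≤ M * ‖v‖ := by
  calc ‖Real.exp a • A *ᵥ v‖ = Real.exp a * ‖A *ᵥ v‖ := norm_exp_smul a _
    _ ≤ Real.exp a * (‖A‖ * ‖v‖) := by gcongr; exact Matrix.linfty_opNorm_mulVec A v
    _ ≤ Real.exp a * (M * Real.exp (-a) * ‖v‖) := by gcongr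
    _ = M * ‖v‖ := by rw [Real.exp_neg]; field_simp

theorem norm_exp_smul_mulVec_abs_le_starNorm {Y : Type*} [Fintype Y]
    {S : NNReal → Matrix Y Y ℝ} {M ξ : ℝ}
    (hdecay : ∀ t : NNReal, ‖S t‖ ≤ M * Real.exp (-ξ * t)) (t : NNReal) (f : Y → ℝ) :
    ‖Real.exp (ξ * t) • S t *ᵥ |f|‖ ≤ starNorm ξ S f := by
  have bounded : BddAbove (Set.range fun s : NNReal => ‖Real.exp (ξ * s) • S s *ᵥ |f|‖) := by
    refine ⟨M * ‖|f|‖, Set.forall_mem_range.2 fun s => norm_exp_smul_mulVec_le ?_ |f|⟩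
    simpa only [neg_mul] using hdecay s
  exact le_ciSup bounded t

theorem starNorm_quasicontractive_general {Y : Type*} [Fintype Y] (S : NNReal → Matrix Y Y ℝ)
    (hpos : ∀ t, ∀ x y, 0 ≤ S t x y)
    (hsem : ∀ t s, S (t + s) = S t * S s)
    (M ξ : ℝ) (hdecay : ∀ t : NNReal, ‖S t‖ ≤ M * Real.exp (-ξ * t))
    (t : NNReal) (f : Y → ℝ) :
    starNorm ξ S (S t *ᵥ f) ≤ Real.exp (-ξ * t) * starNorm ξ S f := by
  refine ciSup_le fun s => ?_
  have exp_shift : Real.exp (ξ * s) = Real.exp (-ξ * t) * Real.exp (ξ * (s + t : NNReal)) := by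
    rw [← Real.exp_add]
    push_cast
    ring_nf
  calc ‖Real.exp (ξ * s) • S s *ᵥ |S t *ᵥ f|‖
      = Real.exp (ξ * s) * ‖S s *ᵥ |S t *ᵥ f|‖ := norm_exp_smul _ _
    _ ≤ Real.exp (ξ * s) * ‖S (s + t) *ᵥ |f|‖ := by
        rw [hsem]
        gcongr
        exact norm_mulVec_abs_mulVec_le (hpos s) (hpos t) f
    _ = Real.exp (-ξ * t) * ‖Real.exp (ξ * (s + t : NNReal)) • S (s + t) *ᵥ |f|‖ := by
        rw [norm_exp_smul, exp_shift, mul_assoc]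
    _ ≤ Real.exp (-ξ * t) * starNorm ξ S f := by
        gcongr
        exact norm_exp_smul_mulVec_abs_le_starNorm hdecay (s + t) f

/-- For a uniformly exponentially stable semigroup of nonnegative matrices, the semigroup is
quasicontractive in the Feller re-norming: `‖(S t).mulVec f‖_* ≤ exp (-ξ t) * ‖f‖_*`. -/
theorem starNorm_quasicontractive {Y : Type*} [Fintype Y] [Nonempty Y] [DecidableEq Y]
    (S : NNReal → Matrix Y Y ℝ)
    (hpos : ∀ t, ∀ x y, 0 ≤ S t x y)
    (hid : S 0 = 1)
    (hsem : ∀ t s, S (t + s) = S t * S s)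
    (M ξ : ℝ) (hM : 1 ≤ M) (hξ : 0 < ξ)
    (hdecay : ∀ t : NNReal, ‖S t‖ ≤ M * Real.exp (-ξ * t)) :
    ∀ (t : NNReal) (f : Y → ℝ),
      starNorm ξ S ((S t).mulVec f) ≤ Real.exp (-ξ * t) * starNorm ξ S f :=
  starNorm_quasicontractive_general S hpos hsem M ξ hdecay
end

section
/- Let Y be a nonempty finite type, T : Matrix Y Y ℝ, and let ‖·‖_* be a norm on Y → ℝ such that ‖f‖ ≤ ‖f‖_* ≤ c · ‖f‖ for all f : Y → ℝ, where ‖·‖ is the supremum norm and c ≥ 1. Let ξ > 0 and Δ > 0 with Δ · ξ < 1, and suppose the operator norm of T with respect to ‖·‖_* is at most exp(−ξ Δ). Then the matrix 1 − T is invertible, and the operator norm of (1 − T)⁻¹ induced by the supremum norm is strictly less than (2 c / ξ) / Δ. -/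
attribute [local instance]
  Matrix.linftyOpNormedAddCommGroup Matrix.linftyOpNormedRing Matrix.linftyOpNormedAlgebra

/-!
The contraction hypothesis iterates: `‖Tⁿ f‖ ≤ N (Tⁿ f) ≤ qⁿ N f ≤ c qⁿ ‖f‖` with `q = exp (-x)`,
`x = ξ Δ`, so the powers of `T` decay geometrically in the original operator norm, and the Neumann
series `∑ Tⁿ` converges to `(1 - T)⁻¹` with norm at most `c / (1 - q)`. Finally `1 + x < exp x`
gives `1 / (1 - exp (-x)) < 1 + 1 / x`, which is at most `2 / x` for `x ≤ 1`.
-/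

open scoped Ring

theorem map_ringInverse {M₀ M₁ F : Type*} [MonoidWithZero M₀] [MonoidWithZero M₁] [FunLike F M₀ M₁]
    [MonoidWithZeroHomClass F M₀ M₁] (f : F) [IsLocalHom f] (a : M₀) : f a⁻¹ʳ = (f a)⁻¹ʳ := by
  by_cases ha : IsUnit a
  · obtain ⟨u, rfl⟩ := ha
    rw [Ring.inverse_unit]
    exact (Ring.inverse_unit (Units.map (f : M₀ →* M₁) u)).symm
  · rw [Ring.inverse_non_unit a ha, map_zero,
      Ring.inverse_non_unit (f a) (mt (isUnit_of_map_unit f a) ha)]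

theorem inv_one_sub_exp_neg_lt {x : ℝ} (hx : 0 < x) : (1 - Real.exp (-x))⁻¹ < 1 + x⁻¹ := by
  have hexp : (Real.exp x)⁻¹ < (x + 1)⁻¹ :=
    inv_strictAnti₀ (by positivity) (Real.add_one_lt_exp hx.ne')
  have hlower : x / (x + 1) < 1 - Real.exp (-x) := by
    calc x / (x + 1) = 1 - (x + 1)⁻¹ := by field_simp; ring
      _ < 1 - Real.exp (-x) := by rw [Real.exp_neg]; linarith
  calc (1 - Real.exp (-x))⁻¹ < (x / (x + 1))⁻¹ := inv_strictAnti₀ (by positivity) hlower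
    _ = 1 + x⁻¹ := by rw [inv_div, add_div, div_self hx.ne', one_div]

theorem mul_one_add_inv_le_two_mul_div {α : Type*} [Field α] [LinearOrder α] [IsStrictOrderedRing α]
    {c x : α} (hc : 0 ≤ c) (hx₀ : 0 < x) (hx₁ : x ≤ 1) : c * (1 + x⁻¹) ≤ 2 * c / x := by
  calc c * (1 + x⁻¹) ≤ c * (x⁻¹ + x⁻¹) := by
        gcongr
        exact (one_le_inv₀ hx₀).mpr hx₁
    _ = 2 * c / x := by ring

section NeumannSeries

variable {R : Type*}

theorem isUnit_one_sub_of_summable_pow [Ring R] [TopologicalSpace R] [IsTopologicalRing R]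
    [T2Space R] {a : R} (h : Summable (a ^ ·)) : IsUnit (1 - a) :=
  isUnit_iff_exists.mpr ⟨∑' n, a ^ n, h.one_sub_mul_tsum_pow, h.tsum_pow_mul_one_sub⟩

theorem ringInverse_one_sub_eq_tsum_pow [Ring R] [TopologicalSpace R] [IsTopologicalRing R]
    [T2Space R] {a : R} (h : Summable (a ^ ·)) : (1 - a)⁻¹ʳ = ∑' n, a ^ n :=
  Ring.inverse_unit ⟨1 - a, ∑' n, a ^ n, h.one_sub_mul_tsum_pow, h.tsum_pow_mul_one_sub⟩

theorem norm_ringInverse_one_sub_le [NormedRing R] [CompleteSpace R] {a : R} {g : ℕ → ℝ} {C : ℝ}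
    (hg : HasSum g C) (h : ∀ n, ‖a ^ n‖ ≤ g n) : ‖(1 - a)⁻¹ʳ‖ ≤ C := by
  have hsum : Summable (a ^ ·) := hg.summable.of_norm_bounded h
  rw [ringInverse_one_sub_eq_tsum_pow hsum]
  exact tsum_of_norm_bounded hg h

end NeumannSeries

section ComparableNorm

variable {𝕜 E : Type*} [NontriviallyNormedField 𝕜]

theorem norm_pow_le_of_comparable_of_contracting [SeminormedAddCommGroup E] [NormedSpace 𝕜 E]
    {T : E →L[𝕜] E} {N : E → ℝ} {c q : ℝ} (hc : 0 ≤ c) (hq : 0 ≤ q)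
    (hN : ∀ f, ‖f‖ ≤ N f ∧ N f ≤ c * ‖f‖) (hT : ∀ f, N (T f) ≤ q * N f) (n : ℕ) :
    ‖T ^ n‖ ≤ c * q ^ n := by
  refine ContinuousLinearMap.opNorm_le_bound _ (by positivity) fun f ↦ ?_
  have hiter : N ((T ^ n) f) ≤ q ^ n * N f :=
    le_geom (u := fun k ↦ N ((T ^ k) f)) hq n fun k _ ↦ by
      simpa only [pow_succ', mul_apply_eq_comp, Function.comp_apply] using hT ((T ^ k) f)
  calc ‖(T ^ n) f‖ ≤ N ((T ^ n) f) := (hN _).1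
    _ ≤ q ^ n * N f := hiter
    _ ≤ q ^ n * (c * ‖f‖) := by gcongr; exact (hN f).2
    _ = c * q ^ n * ‖f‖ := by ring

theorem resolvent_norm_bound_general [NormedAddCommGroup E] [NormedSpace 𝕜 E] [CompleteSpace E]
    (T : E →L[𝕜] E) (N : E → ℝ) {c r : ℝ} (hc : 0 < c) (hr : 0 < r)
    (hN : ∀ f, ‖f‖ ≤ N f ∧ N f ≤ c * ‖f‖) (hT : ∀ f, N (T f) ≤ Real.exp (-r) * N f) :
    IsUnit (1 - T) ∧ ‖(1 - T)⁻¹ʳ‖ < c * (1 + r⁻¹) := by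
  have hpow : ∀ n, ‖T ^ n‖ ≤ c * Real.exp (-r) ^ n :=
    norm_pow_le_of_comparable_of_contracting hc.le (Real.exp_nonneg _) hN hT
  have hgeom : HasSum (fun n ↦ c * Real.exp (-r) ^ n) (c * (1 - Real.exp (-r))⁻¹) :=
    (hasSum_geometric_of_lt_one (Real.exp_nonneg _)
      (Real.exp_lt_one_iff.mpr (neg_lt_zero.mpr hr))).mul_left c
  refine ⟨isUnit_one_sub_of_summable_pow (hgeom.summable.of_norm_bounded hpow), ?_⟩
  calc ‖(1 - T)⁻¹ʳ‖ ≤ c * (1 - Real.exp (-r))⁻¹ := norm_ringInverse_one_sub_le hgeom hpow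
    _ < c * (1 + r⁻¹) := mul_lt_mul_of_pos_left (inv_one_sub_exp_neg_lt hr) hc

end ComparableNorm

section MatrixOperator

variable (n 𝕜 : Type*) [Fintype n] [DecidableEq n] [NontriviallyNormedField 𝕜] [CompleteSpace 𝕜]

/-- The algebra equivalence sending a square matrix `A` to the continuous linear operator
`f ↦ A *ᵥ f`. It carries results on the Banach algebra of operators on `n → 𝕜` over to matrices. -/
noncomputable def mulVecCLM : Matrix n n 𝕜 ≃ₐ[𝕜] ((n → 𝕜) →L[𝕜] (n → 𝕜)) :=
  Matrix.toLinAlgEquiv'.trans (Module.End.toContinuousLinearMap (n → 𝕜))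

variable {n 𝕜}

theorem norm_mulVecCLM [NormedAlgebra ℝ 𝕜] (A : Matrix n n 𝕜) : ‖mulVecCLM n 𝕜 A‖ = ‖A‖ :=
  (Matrix.linfty_opNorm_eq_opNorm A).symm

theorem norm_ringInverse_mulVecCLM [NormedAlgebra ℝ 𝕜] (A : Matrix n n 𝕜) :
    ‖(mulVecCLM n 𝕜 A)⁻¹ʳ‖ = ‖A⁻¹‖ := by
  rw [← map_ringInverse, norm_mulVecCLM, Matrix.nonsing_inv_eq_ringInverse]

end MatrixOperator

/-- If a matrix `T` has operator norm at most `exp (-ξ Δ)` with respect to a norm `N`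
equivalent to the supremum norm (with `‖f‖ ≤ N f ≤ c ‖f‖`), and `Δ ξ < 1`, then `1 - T` is
invertible and `‖(1 - T)⁻¹‖ < (2 c / ξ) / Δ` in the operator norm induced by the supremum
norm. -/
theorem resolvent_norm_bound {Y : Type*} [Fintype Y] [Nonempty Y] [DecidableEq Y]
    (T : Matrix Y Y ℝ) (N : (Y → ℝ) → ℝ)
    (hNadd : ∀ f g : Y → ℝ, N (f + g) ≤ N f + N g)
    (hNsmul : ∀ (a : ℝ) (f : Y → ℝ), N (a • f) = |a| * N f)
    (c : ℝ) (hc : 1 ≤ c)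
    (hequiv : ∀ f : Y → ℝ, ‖f‖ ≤ N f ∧ N f ≤ c * ‖f‖)
    (ξ Δ : ℝ) (hξ : 0 < ξ) (hΔ : 0 < Δ) (hΔξ : Δ * ξ < 1)
    (hT : ∀ f : Y → ℝ, N (T.mulVec f) ≤ Real.exp (-(ξ * Δ)) * N f) :
    IsUnit (1 - T) ∧ ‖(1 - T)⁻¹‖ < (2 * c / ξ) / Δ := by
  have hgen := resolvent_norm_bound_general (mulVecCLM Y ℝ T) N (zero_lt_one.trans_le hc)
    (mul_pos hξ hΔ) hequiv hT
  rw [← map_one (mulVecCLM Y ℝ), ← map_sub, MulEquiv.isUnit_map, norm_ringInverse_mulVecCLM] at hgen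
  rw [div_div]
  exact hgen.imp_right fun hlt ↦ hlt.trans_le <|
    mul_one_add_inv_le_two_mul_div (by positivity) (mul_pos hξ hΔ) (mul_comm Δ ξ ▸ hΔξ.le)
end

section
/- Let T̲ : (X → ℝ) → (X → ℝ) be a lower transition operator, i.e. for all f, g : X → ℝ, all λ ≥ 0, and all x ∈ X: (i) (T̲ f)(x) ≥ min_{y ∈ X} f(y); (ii) T̲ f + T̲ g ≤ T̲ (f + g) pointwise; (iii) T̲ (λ • f) = λ • T̲ f. Then for every f : X → ℝ there exists a transition matrix T such that T.mulVec g ≥ T̲ g pointwise for every g : X → ℝ, and T.mulVec f = T̲ f. -/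
/-!
Evaluating a lower transition operator at a fixed state gives a superlinear functional on `X → ℝ`.
By Hahn–Banach such a functional is dominated by a linear one that agrees with it at `f`.
Since it also lies above the minimum, that linear functional is the expectation with respect to
a probability vector. These vectors are the rows of the required matrix.
-/

/-- A transition matrix: nonnegative entries and every row sums to one. -/
def IsTransitionMatrix {X : Type*} [Fintype X] (T : Matrix X X ℝ) : Prop :=
  (∀ x y, 0 ≤ T x y) ∧ ∀ x, ∑ y, T x y = 1

section Sublinear

variable {E : Type*} [AddCommGroup E] [Module ℝ E] {N : E → ℝ}

theorem map_zero_of_pos_homogeneous (N_hom : ∀ c : ℝ, 0 < c → ∀ x, N (c • x) = c * N x) :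
    N 0 = 0 := by
  have h : N 0 = 2 * N 0 := by simpa only [smul_zero] using N_hom 2 two_pos 0
  linarith

theorem mul_le_map_smul_of_sublinear (N_hom : ∀ c : ℝ, 0 < c → ∀ x, N (c • x) = c * N x)
    (N_add : ∀ x y, N (x + y) ≤ N x + N y) (c : ℝ) (x : E) : c * N x ≤ N (c • x) := by
  have N_zero := map_zero_of_pos_homogeneous N_hom
  rcases lt_trichotomy c 0 with hc | rfl | hc
  · have h_neg : N ((-c) • x) = -c * N x := N_hom (-c) (neg_pos.2 hc) x
    have h_add : N (c • x + (-c) • x) ≤ N (c • x) + N ((-c) • x) := N_add _ _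
    rw [← add_smul, add_neg_cancel, zero_smul, N_zero, h_neg] at h_add
    linarith
  · rw [zero_mul, zero_smul, N_zero]
  · exact (N_hom c hc x).ge

theorem exists_linearMap_le_sublinear_eq_at
    (N_hom : ∀ c : ℝ, 0 < c → ∀ x, N (c • x) = c * N x)
    (N_add : ∀ x y, N (x + y) ≤ N x + N y) (x : E) :
    ∃ l : E →ₗ[ℝ] ℝ, (∀ y, l y ≤ N y) ∧ l x = N x := by
  have well_defined (c : ℝ) (hc : c • x = 0) : c • N x = 0 := by
    rcases smul_eq_zero.1 hc with rfl | rfl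
    · exact zero_smul ℝ _
    · rw [map_zero_of_pos_homogeneous N_hom, smul_zero]
  let φ : E →ₗ.[ℝ] ℝ := LinearPMap.mkSpanSingleton' x (N x) well_defined
  have φ_le : ∀ y : φ.domain, φ y ≤ N y := by
    rintro ⟨y, hy⟩
    obtain ⟨c, rfl⟩ := Submodule.mem_span_singleton.1 hy
    exact (LinearPMap.mkSpanSingleton'_apply x (N x) well_defined c hy).trans_le
      (mul_le_map_smul_of_sublinear N_hom N_add c x)
  obtain ⟨l, l_eq, l_le⟩ := exists_extension_of_le_sublinear φ N N_hom N_add φ_le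
  have hx : x ∈ φ.domain := Submodule.mem_span_singleton_self x
  exact ⟨l, l_le, (l_eq ⟨x, hx⟩).trans
    (LinearPMap.mkSpanSingleton'_apply_self x (N x) well_defined hx)⟩

theorem exists_linearMap_ge_superlinear_eq_at {M : E → ℝ}
    (M_hom : ∀ c : ℝ, 0 < c → ∀ x, M (c • x) = c * M x)
    (M_add : ∀ x y, M x + M y ≤ M (x + y)) (x : E) :
    ∃ l : E →ₗ[ℝ] ℝ, (∀ y, M y ≤ l y) ∧ l x = M x := by
  -- The conjugate `y ↦ -M (-y)` is sublinear, and a linear map is its own conjugate.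
  obtain ⟨l, l_le, l_eq⟩ := exists_linearMap_le_sublinear_eq_at (N := fun y ↦ -M (-y))
    (fun c hc y ↦ by rw [← smul_neg, M_hom c hc, mul_neg])
    (fun y z ↦ by linarith only [M_add (-y) (-z), congrArg M (neg_add y z)]) (-x)
  simp only [map_neg, neg_neg, neg_inj] at l_eq
  refine ⟨l, fun y ↦ ?_, l_eq⟩
  simpa only [map_neg, neg_neg, neg_le_neg_iff] using l_le (-y)

end Sublinear

section Simplex

variable {X : Type*} [Fintype X] [Nonempty X]

theorem mem_stdSimplex_of_iInf_le_dotProduct {p : X → ℝ}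
    (hp : ∀ g : X → ℝ, ⨅ y, g y ≤ p ⬝ᵥ g) : p ∈ stdSimplex ℝ X := by
  classical
  refine ⟨fun x ↦ ?_, le_antisymm ?_ ?_⟩
  · calc
      0 ≤ ⨅ y, (Pi.single x 1 : X → ℝ) y :=
        le_ciInf (Pi.single_nonneg.2 zero_le_one : (0 : X → ℝ) ≤ Pi.single x 1)
      _ ≤ p ⬝ᵥ Pi.single x 1 := hp _
      _ = p x := dotProduct_single_one p x
  · have h : -1 ≤ p ⬝ᵥ -1 := by simpa only [Pi.neg_apply, Pi.one_apply, ciInf_const] using hp (-1)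
    rwa [dotProduct_neg, dotProduct_one, neg_le_neg_iff] at h
  · simpa only [Pi.one_apply, ciInf_const, dotProduct_one] using hp 1

theorem exists_mem_stdSimplex_ge_superlinear_eq_at {M : (X → ℝ) → ℝ}
    (iInf_le_M : ∀ g, ⨅ y, g y ≤ M g)
    (M_hom : ∀ c : ℝ, 0 < c → ∀ g, M (c • g) = c * M g)
    (M_add : ∀ g h, M g + M h ≤ M (g + h)) (f : X → ℝ) :
    ∃ p ∈ stdSimplex ℝ X, (∀ g, M g ≤ p ⬝ᵥ g) ∧ p ⬝ᵥ f = M f := by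
  classical
  obtain ⟨l, M_le, l_eq⟩ := exists_linearMap_ge_superlinear_eq_at M_hom M_add f
  obtain ⟨p, rfl⟩ := (dotProductEquiv ℝ X).surjective l
  exact ⟨p, mem_stdSimplex_of_iInf_le_dotProduct fun g ↦ (iInf_le_M g).trans (M_le g), M_le, l_eq⟩

end Simplex

/-- For a lower transition operator `T̲`, every `f` admits a dominating transition matrix `T`
(`T.mulVec g ≥ T̲ g` for all `g`) that attains `T̲` at `f`: `T.mulVec f = T̲ f`. -/
theorem lowerTransitionOperator_attained {X : Type*} [Fintype X] [Nontrivial X]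
    (L : (X → ℝ) → (X → ℝ))
    (h1 : ∀ (f : X → ℝ) (x : X), (⨅ y, f y) ≤ L f x)
    (h2 : ∀ f g : X → ℝ, L f + L g ≤ L (f + g))
    (h3 : ∀ (lam : ℝ), 0 ≤ lam → ∀ f : X → ℝ, L (lam • f) = lam • L f) :
    ∀ f : X → ℝ, ∃ T : Matrix X X ℝ,
      IsTransitionMatrix T ∧ (∀ g : X → ℝ, L g ≤ T.mulVec g) ∧ T.mulVec f = L f := by
  intro f
  have exists_row (x : X) :
      ∃ p ∈ stdSimplex ℝ X, (∀ g, L g x ≤ p ⬝ᵥ g) ∧ p ⬝ᵥ f = L f x :=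
    exists_mem_stdSimplex_ge_superlinear_eq_at (fun g ↦ h1 g x)
      (fun c hc g ↦ congrFun (h3 c hc.le g) x) (fun g h ↦ h2 g h x) f
  choose T T_mem L_le T_eq using exists_row
  exact ⟨T, ⟨fun x ↦ (T_mem x).1, fun x ↦ (T_mem x).2⟩, fun g x ↦ L_le x g, funext T_eq⟩
end

section
/- Let Q̲ : (X → ℝ) → (X → ℝ) be a lower rate operator, i.e. for all f, g : X → ℝ, all λ ≥ 0, all μ ∈ ℝ, and all x, y ∈ X with y ≠ x: (i) Q̲ (μ • 1)(x) = 0; (ii) Q̲ (𝟙_y)(x) ≥ 0; (iii) Q̲ f + Q̲ g ≤ Q̲ (f + g) pointwise; (iv) Q̲ (λ • f) = λ • Q̲ f. Then the dominating set { Q : Matrix X X ℝ | Q is a rate matrix and Q.mulVec g ≥ Q̲ g pointwise for every g : X → ℝ } is nonempty, convex, and compact in the finite-dimensional space of real X × X matrices. -/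
/-- A rate matrix: off-diagonal entries nonnegative and every row sums to zero. -/
def IsRateMatrix {X : Type*} [Fintype X] (Q : Matrix X X ℝ) : Prop :=
  (∀ x y, x ≠ y → 0 ≤ Q x y) ∧ ∀ x, ∑ y, Q x y = 0

/-!
A matrix `Q` dominating an operator `L` satisfies `L g ≤ Q g ≤ -L (-g)` for every `g`, since `Q` is
linear. Taking `g` to be the coordinate vectors bounds every entry of `Q`, so the dominating
matrices, cut out by closed half-spaces, form a compact convex set. If `L` is a lower rate operator,
taking `g = 1` forces the row sums of `Q` to vanish, so dominating matrices are automatically rate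
matrices, and only existence uses superlinearity: Hahn–Banach yields a linear functional above each
coordinate of `L`, and these functionals are the rows of a dominating matrix.
-/

section Superlinear

variable {E ι : Type*} [AddCommGroup E] [Module ℝ E]

theorem exists_linearMap_ge_of_superlinear (p : E → ℝ)
    (p_hom : ∀ c : ℝ, 0 < c → ∀ v, p (c • v) = c * p v)
    (p_add : ∀ v w, p v + p w ≤ p (v + w)) :
    ∃ φ : E →ₗ[ℝ] ℝ, ∀ v, p v ≤ φ v := by
  have p_zero : p 0 = 0 := by
    have h := p_hom 2 two_pos 0
    rw [smul_zero] at h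
    linarith
  obtain ⟨φ, -, hφ⟩ := exists_extension_of_le_sublinear ⟨⊥, 0⟩ (fun v ↦ -p (-v))
    (fun c hc v ↦ by rw [← smul_neg, p_hom c hc, mul_neg])
    (fun v w ↦ by linarith [p_add (-v) (-w), congrArg p (neg_add v w)])
    (by
      rintro ⟨v, hv⟩
      obtain rfl := (Submodule.mem_bot ℝ).mp hv
      simp [p_zero])
  refine ⟨φ, fun v ↦ ?_⟩
  simpa using hφ (-v)

theorem exists_linearMap_pi_ge_of_superlinear (L : E → ι → ℝ)
    (L_hom : ∀ c : ℝ, 0 < c → ∀ v, L (c • v) = c • L v)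
    (L_add : ∀ v w, L v + L w ≤ L (v + w)) :
    ∃ Φ : E →ₗ[ℝ] ι → ℝ, ∀ v, L v ≤ Φ v := by
  have rowwise (i : ι) : ∃ φ : E →ₗ[ℝ] ℝ, ∀ v, L v i ≤ φ v :=
    exists_linearMap_ge_of_superlinear (fun v ↦ L v i)
      (fun c hc v ↦ congrFun (L_hom c hc v) i) (fun v w ↦ L_add v w i)
  choose φ hφ using rowwise
  exact ⟨LinearMap.pi φ, fun v i ↦ hφ i v⟩

end Superlinear

section DominatingMatrices

open scoped Matrix

variable {m n : Type*} [Fintype n]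

/-- The matrices that dominate a (possibly nonlinear) operator `L` between function spaces. For a
lower rate operator this is its dominating set: the rate-matrix condition is then automatic, see
`isRateMatrix_of_mem_dominatingMatrices`. -/
def dominatingMatrices (L : (n → ℝ) → m → ℝ) : Set (Matrix m n ℝ) :=
  {Q | ∀ g, L g ≤ Q *ᵥ g}

theorem dominatingMatrices_nonempty {L : (n → ℝ) → m → ℝ}
    (L_hom : ∀ c : ℝ, 0 < c → ∀ g, L (c • g) = c • L g)
    (L_add : ∀ f g, L f + L g ≤ L (f + g)) :
    (dominatingMatrices L).Nonempty := by
  classical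
  obtain ⟨Φ, hΦ⟩ := exists_linearMap_pi_ge_of_superlinear L L_hom L_add
  exact ⟨Φ.toMatrix', fun g ↦ (hΦ g).trans_eq (Φ.toMatrix'_mulVec g).symm⟩

theorem dominatingMatrices_eq_iInter (L : (n → ℝ) → m → ℝ) :
    dominatingMatrices L = ⋂ g, (· *ᵥ g) ⁻¹' Set.Ici (L g) := by
  ext Q
  simp [dominatingMatrices]

theorem convex_dominatingMatrices (L : (n → ℝ) → m → ℝ) : Convex ℝ (dominatingMatrices L) := by
  rw [dominatingMatrices_eq_iInter]
  exact convex_iInter fun g ↦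
    (convex_Ici (L g)).linear_preimage ((Matrix.mulVecBilin ℝ ℝ).flip g)

theorem isClosed_dominatingMatrices (L : (n → ℝ) → m → ℝ) : IsClosed (dominatingMatrices L) := by
  rw [dominatingMatrices_eq_iInter]
  exact isClosed_iInter fun g ↦
    isClosed_Ici.preimage (continuous_id.matrix_mulVec continuous_const)

theorem mulVec_mem_Icc_of_mem_dominatingMatrices {L : (n → ℝ) → m → ℝ} {Q : Matrix m n ℝ}
    (hQ : Q ∈ dominatingMatrices L) (g : n → ℝ) : Q *ᵥ g ∈ Set.Icc (L g) (-L (-g)) := by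
  refine ⟨hQ g, le_neg_of_le_neg ?_⟩
  simpa only [Matrix.mulVec_neg] using hQ (-g)

theorem isCompact_dominatingMatrices (L : (n → ℝ) → m → ℝ) :
    IsCompact (dominatingMatrices L) := by
  classical
  have box_compact : IsCompact (Set.univ.pi fun i ↦ Set.univ.pi fun j ↦
      Set.Icc (L (Pi.single j 1) i) ((-L (-Pi.single j 1)) i)) :=
    isCompact_univ_pi fun i ↦ isCompact_univ_pi fun j ↦ isCompact_Icc
  refine box_compact.of_isClosed_subset (X := Matrix m n ℝ) (isClosed_dominatingMatrices L) ?_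
  intro Q hQ i _ j _
  have column_mem := mulVec_mem_Icc_of_mem_dominatingMatrices hQ (Pi.single j 1)
  rw [Matrix.mulVec_single_one] at column_mem
  exact ⟨column_mem.1 i, column_mem.2 i⟩

theorem isRateMatrix_of_mem_dominatingMatrices [DecidableEq n] {L : (n → ℝ) → n → ℝ}
    {Q : Matrix n n ℝ} (L_one : 0 ≤ L 1) (L_neg_one : 0 ≤ L (-1))
    (L_single : ∀ i j, i ≠ j → 0 ≤ L (Pi.single j 1) i) (hQ : Q ∈ dominatingMatrices L) :
    IsRateMatrix Q := by
  refine ⟨fun i j hij ↦ ?_, fun i ↦ ?_⟩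
  · simpa using (L_single i j hij).trans (hQ (Pi.single j 1) i)
  · obtain ⟨lower, upper⟩ := mulVec_mem_Icc_of_mem_dominatingMatrices hQ 1
    have mulVec_one_eq_zero : Q *ᵥ 1 = 0 :=
      le_antisymm (upper.trans (neg_nonpos.mpr L_neg_one)) (L_one.trans lower)
    simpa [Matrix.mulVec, dotProduct] using congrFun mulVec_one_eq_zero i

end DominatingMatrices

/-- For a lower rate operator `Q̲`, the set of dominating rate matrices is nonempty, convex,
and compact. -/
theorem dominating_rateMatrices_nonempty_convex_compact
    {X : Type*} [Fintype X] [DecidableEq X] [Nontrivial X]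
    (L : (X → ℝ) → (X → ℝ))
    (h1 : ∀ (μ : ℝ) (x : X), L (fun _ => μ) x = 0)
    (h2 : ∀ x y : X, y ≠ x → 0 ≤ L (fun z => if z = y then 1 else 0) x)
    (h3 : ∀ f g : X → ℝ, L f + L g ≤ L (f + g))
    (h4 : ∀ (lam : ℝ), 0 ≤ lam → ∀ f : X → ℝ, L (lam • f) = lam • L f) :
    {Q : Matrix X X ℝ | IsRateMatrix Q ∧ ∀ g : X → ℝ, L g ≤ Q.mulVec g}.Nonempty ∧
    Convex ℝ {Q : Matrix X X ℝ | IsRateMatrix Q ∧ ∀ g : X → ℝ, L g ≤ Q.mulVec g} ∧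
    IsCompact {Q : Matrix X X ℝ | IsRateMatrix Q ∧ ∀ g : X → ℝ, L g ≤ Q.mulVec g} := by
  have L_single (x y : X) (hxy : x ≠ y) : 0 ≤ L (Pi.single y 1) x := by
    convert h2 x y hxy.symm using 3 with z
    exact Pi.single_apply y 1 z
  have dominating_rate_eq :
      {Q : Matrix X X ℝ | IsRateMatrix Q ∧ ∀ g : X → ℝ, L g ≤ Q.mulVec g} = dominatingMatrices L :=
    Set.ext fun _ ↦ and_iff_right_of_imp <| isRateMatrix_of_mem_dominatingMatrices
      (fun x ↦ (h1 1 x).ge) (fun x ↦ (h1 (-1) x).ge) L_single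
  rw [dominating_rate_eq]
  exact ⟨dominatingMatrices_nonempty (fun c hc ↦ h4 c hc.le) h3,
    convex_dominatingMatrices L, isCompact_dominatingMatrices L⟩
end
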